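/- Truncated addition is monotone in the truncation parameter in the following sense: for N-bit binary numbers x, y and integers 0 ≤ m ≤ m', if x +_m y ≡ x + y (mod 2^N) then x +_{m'} y ≡ x + y (mod 2^N). -/

import Mathlib

/-!
Truncating the carry chain can only lose carries: `tcarry m x y i` is `0` or `1`, is monotone in
`m`, and is at most the untruncated carry `tcarry i x y i`. The untruncated carries obey the
schoolbook recursion (`tcarry_full_succ`), hence they produce the true sum modulo `2 ^ N`
(`full_sum_eq`). By uniqueness of binary expansions (`digits_unique`), agreement of the
`m`-truncated sum with the true sum forces `tcarry m` to equal the untruncated carry at every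
position below `N`. Then `tcarry m'`, lying between the two, equals both, so the `m'`-truncated sum
has the same digits as the `m`-truncated one.
-/

/-- The `i`-th binary digit of `x`. -/
def bitd (x i : ℕ) : ℕ := (x / 2 ^ i) % 2

open Classical in
/-- The `m`-truncated carry bit at position `i`: it is 1 iff there is
`i - m ≤ j < i` with `(x_j, y_j) = (1,1)` and `x_k + y_k = 1` for all `j < k < i`. -/
noncomputable def tcarry (m x y i : ℕ) : ℕ :=
  if ∃ j, i - m ≤ j ∧ j < i ∧ bitd x j = 1 ∧ bitd y j = 1 ∧
      (∀ k, j < k → k < i → bitd x k + bitd y k = 1) then 1 else 0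

/-- The `m`-truncated addition of `N`-bit numbers: the bitwise xor of `x`, `y`
and the truncated carry array. -/
noncomputable def tadd (N m x y : ℕ) : ℕ :=
  ∑ i ∈ Finset.range N, ((bitd x i + bitd y i + tcarry m x y i) % 2) * 2 ^ i

lemma bitd_lt_two (x i : ℕ) : bitd x i < 2 := Nat.mod_lt _ (by norm_num)

lemma tcarry_le_one (m x y i : ℕ) : tcarry m x y i ≤ 1 := by
  unfold tcarry; split_ifs <;> simp

lemma tcarry_mono {m m' : ℕ} (h : m ≤ m') (x y i : ℕ) : tcarry m x y i ≤ tcarry m' x y i := by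
  unfold tcarry
  split_ifs with h1 h2
  · rfl
  · obtain ⟨j, hj, hr⟩ := h1
    exact absurd ⟨j, by omega, hr⟩ h2
  · simp
  · rfl

/-- With truncation parameter `i` the window at position `i` is already all of `0, …, i - 1`. -/
lemma tcarry_le_full (m x y i : ℕ) : tcarry m x y i ≤ tcarry i x y i := by
  unfold tcarry
  split_ifs with h1 h2
  · rfl
  · obtain ⟨j, hj, hr⟩ := h1
    exact absurd ⟨j, by omega, hr⟩ h2
  · simp
  · rfl

/-- The untruncated carry satisfies the usual recursion: the next carry is the majority of the two
digits and the current carry. -/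
lemma tcarry_full_succ (x y i : ℕ) :
    tcarry (i + 1) x y (i + 1) = (bitd x i + bitd y i + tcarry i x y i) / 2 := by
  have hx := bitd_lt_two x i
  have hy := bitd_lt_two y i
  by_cases hg : bitd x i = 1 ∧ bitd y i = 1
  -- the pair `(1, 1)` at `i` generates a carry
  · have h1 : tcarry (i + 1) x y (i + 1) = 1 := by
      unfold tcarry
      exact if_pos ⟨i, by omega, by omega, hg.1, hg.2, fun k _ _ => by omega⟩
    have := tcarry_le_one i x y i
    omega
  by_cases hp : bitd x i + bitd y i = 1
  -- digits summing to `1` propagate the incoming carry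
  · have h1 : tcarry (i + 1) x y (i + 1) = tcarry i x y i := by
      unfold tcarry
      congr 1
      refine propext ⟨?_, ?_⟩
      · rintro ⟨j, _, hji, hxj, hyj, hk⟩
        have hne : j ≠ i := by rintro rfl; exact hg ⟨hxj, hyj⟩
        exact ⟨j, by omega, by omega, hxj, hyj, fun k h1 h2 => hk k h1 (by omega)⟩
      · rintro ⟨j, _, hji, hxj, hyj, hk⟩
        refine ⟨j, by omega, by omega, hxj, hyj, fun k h1 h2 => ?_⟩
        rcases Nat.lt_succ_iff_lt_or_eq.mp h2 with h3 | rfl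
        · exact hk k h1 h3
        · exact hp
    have := tcarry_le_one i x y i
    omega
  -- the pair `(0, 0)` kills every carry
  · have h1 : tcarry (i + 1) x y (i + 1) = 0 := by
      unfold tcarry
      refine if_neg ?_
      rintro ⟨j, _, hji, hxj, hyj, hk⟩
      have hne : j ≠ i := by rintro rfl; exact hg ⟨hxj, hyj⟩
      exact hp (hk i (by omega) (by omega))
    have := tcarry_le_one i x y i
    omega

/-- Schoolbook addition of the lowest `N` digits, with the outgoing carry made explicit. -/
lemma full_sum_add_carry (x y N : ℕ) :
    (∑ i ∈ Finset.range N, ((bitd x i + bitd y i + tcarry i x y i) % 2) * 2 ^ i)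
      + tcarry N x y N * 2 ^ N = x % 2 ^ N + y % 2 ^ N := by
  induction N with
  | zero => simp [tcarry, Nat.mod_one]
  | succ N ih =>
    rw [Finset.sum_range_succ, tcarry_full_succ, Nat.mod_pow_succ, Nat.mod_pow_succ]
    change _ = x % 2 ^ N + 2 ^ N * bitd x N + (y % 2 ^ N + 2 ^ N * bitd y N)
    have hd := Nat.mod_add_div (bitd x N + bitd y N + tcarry N x y N) 2
    rw [pow_succ]
    linear_combination ih + 2 ^ N * hd

lemma digit_sum_lt (a : ℕ → ℕ) (ha : ∀ i, a i < 2) (N : ℕ) :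
    ∑ i ∈ Finset.range N, a i * 2 ^ i < 2 ^ N := by
  induction N with
  | zero => simp
  | succ N ih =>
    rw [Finset.sum_range_succ, pow_succ]
    have := Nat.mul_le_mul_right (2 ^ N) (Nat.le_of_lt_succ (ha N))
    omega

lemma full_sum_eq (x y N : ℕ) :
    ∑ i ∈ Finset.range N, ((bitd x i + bitd y i + tcarry i x y i) % 2) * 2 ^ i
      = (x + y) % 2 ^ N := by
  have hlt := digit_sum_lt (fun i => (bitd x i + bitd y i + tcarry i x y i) % 2)
    (fun i => Nat.mod_lt _ (by norm_num)) N
  rw [Nat.add_mod, ← full_sum_add_carry, Nat.add_mul_mod_self_right, Nat.mod_eq_of_lt hlt]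

lemma digits_unique (a b : ℕ → ℕ) (ha : ∀ i, a i < 2) (hb : ∀ i, b i < 2) (N : ℕ)
    (h : ∑ i ∈ Finset.range N, a i * 2 ^ i = ∑ i ∈ Finset.range N, b i * 2 ^ i) :
    ∀ i < N, a i = b i := by
  induction N with
  | zero => intro i hi; omega
  | succ N ih =>
    rw [Finset.sum_range_succ, Finset.sum_range_succ] at h
    have h1 := digit_sum_lt a ha N
    have h2 := digit_sum_lt b hb N
    have hN : a N = b N := by
      have h3 := ha N
      have h4 := hb N
      interval_cases a N <;> interval_cases b N <;> omega
    rw [hN] at h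
    intro i hi
    rcases Nat.lt_succ_iff_lt_or_eq.mp hi with h3 | rfl
    · exact ih (Nat.add_right_cancel h) i h3
    · exact hN

/-- monotonicity in the truncation parameter: if the `m`-truncated sum
agrees with ordinary addition mod `2^N`, then so does the `m'`-truncated sum for any
`m' ≥ m`. -/
theorem tadd_agree_mono (N m m' x y : ℕ) (hmm : m ≤ m') (hx : x < 2 ^ N) (hy : y < 2 ^ N)
    (h : tadd N m x y = (x + y) % 2 ^ N) :
    tadd N m' x y = (x + y) % 2 ^ N := by
  have hdig := digits_unique (fun i => (bitd x i + bitd y i + tcarry m x y i) % 2)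
    (fun i => (bitd x i + bitd y i + tcarry i x y i) % 2)
    (fun i => Nat.mod_lt _ (by norm_num)) (fun i => Nat.mod_lt _ (by norm_num)) N
    (h.trans (full_sum_eq x y N).symm)
  rw [← h]
  unfold tadd
  refine Finset.sum_congr rfl fun i hi => ?_
  have h1 := hdig i (Finset.mem_range.mp hi)
  have h2 := tcarry_mono hmm x y i
  have h3 := tcarry_le_full m' x y i
  have h4 := tcarry_le_one i x y i
  have h5 : tcarry m' x y i = tcarry m x y i := by
    omega
  rw [h5]
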